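/- For every λ > 0 and every θ ∈ ℝ, at least one of the following holds: for all odd k ≥ 1 and all E ∈ ℝ, x_k(E, λ, θ) = x_k(E, λ, 0), or for all even k ≥ 0 and all E ∈ ℝ, x_k(E, λ, θ) = x_k(E, λ, 0). -/

import Mathlib

/-- `ω = (√5 - 1)/2`, the inverse of the golden mean. -/
noncomputable def goldenOmega : ℝ := (Real.sqrt 5 - 1) / 2

/-- The Fibonacci potential: `v_θ(n) = 1` if the fractional part of `nω + θ`
lies in `[1 - ω, 1)`, and `0` otherwise. -/
noncomputable def vTheta (θ : ℝ) (n : ℤ) : ℝ :=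
  if Int.fract ((n : ℝ) * goldenOmega + θ) ∈ Set.Ico (1 - goldenOmega) 1 then 1 else 0

/-- The one-step transfer matrix `T(m, E, λ, θ)` with rows
`(E - λ v_θ(m), -1)` and `(1, 0)`. -/
noncomputable def Tmat (lam θ E : ℝ) (m : ℤ) : Matrix (Fin 2) (Fin 2) ℝ :=
  !![E - lam * vTheta θ m, -1; 1, 0]

/-- The transfer matrix over `[1, n]`:
`M(n, E, λ, θ) = T(n, E, λ, θ) ⋯ T(1, E, λ, θ)` (with `M(0) = 1`). -/
noncomputable def Mmat (lam θ E : ℝ) : ℕ → Matrix (Fin 2) (Fin 2) ℝ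
  | 0 => 1
  | n + 1 => Tmat lam θ E ((n : ℤ) + 1) * Mmat lam θ E n

/-- The trace `x_k(E, λ, θ) = tr M(F_k, E, λ, θ)`, where `F_k = Nat.fib (k + 2)`
(the paper's Fibonacci numbers `F_{-1} = F_0 = 1`, `F_k = F_{k-1} + F_{k-2}`). -/
noncomputable def xTrace (lam θ : ℝ) (k : ℕ) (E : ℝ) : ℝ :=
  Matrix.trace (Mmat lam θ E (Nat.fib (k + 2)))

/-- Product of the first `n` values of a matrix sequence, latest factor on the left. -/
noncomputable def prodM (f : ℕ → Matrix (Fin 2) (Fin 2) ℝ) : ℕ → Matrix (Fin 2) (Fin 2) ℝ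
  | 0 => 1
  | n + 1 => f n * prodM f n

lemma prodM_congr (f g : ℕ → Matrix (Fin 2) (Fin 2) ℝ) (n : ℕ) (h : ∀ i < n, f i = g i) :
    prodM f n = prodM g n := by
  induction n with
  | zero => rfl
  | succ n ih =>
    simp only [prodM]
    rw [h n (by omega), ih (fun i hi => h i (by omega))]

lemma prodM_succ' (f : ℕ → Matrix (Fin 2) (Fin 2) ℝ) (n : ℕ) :
    prodM f (n + 1) = prodM (fun i => f (i + 1)) n * f 0 := by
  induction n with
  | zero => simp [prodM]
  | succ n ih =>
    have : prodM f (n + 1 + 1) = f (n + 1) * prodM f (n + 1) := rfl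
    rw [this, ih, ← mul_assoc]
    rfl

lemma trace_prodM_shift (f : ℕ → Matrix (Fin 2) (Fin 2) ℝ) (q : ℕ) (h : f q = f 0) :
    (prodM (fun i => f (i + 1)) q).trace = (prodM f q).trace := by
  cases q with
  | zero => rfl
  | succ n =>
    rw [prodM_succ' f n, Matrix.trace_mul_comm, ← h]
    rfl

lemma Mmat_eq_prodM (lam θ E : ℝ) (n : ℕ) :
    Mmat lam θ E n = prodM (fun i => Tmat lam θ E ((i : ℤ) + 1)) n := by
  induction n with
  | zero => rfl
  | succ n ih => simp only [Mmat, prodM, ih]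

/-- Transfer matrix of the periodic approximant. -/
noncomputable def Tper (lam E : ℝ) (p q c n : ℤ) : Matrix (Fin 2) (Fin 2) ℝ :=
  !![E - lam * ((((n + 1) * p + c) / q - (n * p + c) / q : ℤ) : ℝ), -1; 1, 0]

/-- Trace of the periodic approximant over a period. -/
noncomputable def Gper (lam E : ℝ) (p : ℤ) (q : ℕ) (c : ℤ) : ℝ :=
  (prodM (fun i => Tper lam E p q c ((i : ℤ) + 1)) q).trace

lemma Gper_add_q (lam E : ℝ) (p : ℤ) (q : ℕ) (hq : 0 < q) :
    Function.Periodic (Gper lam E p q) (q : ℤ) := by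
  intro c
  unfold Gper
  congr 1
  apply prodM_congr
  intro i _
  unfold Tper
  have hq' : (q : ℤ) ≠ 0 := by positivity
  have e : ∀ x : ℤ, (x + (c + q)) / (q : ℤ) = (x + c) / q + 1 := by
    intro x
    have := Int.add_mul_ediv_right (x + c) 1 hq'
    rw [one_mul] at this
    rw [← add_assoc, this]
  rw [e, e]
  ring_nf

lemma Gper_add_p (lam E : ℝ) (p : ℤ) (q : ℕ) (hq : 0 < q) :
    Function.Periodic (Gper lam E p q) p := by
  intro c
  unfold Gper
  have hq' : (q : ℤ) ≠ 0 := by positivity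
  rw [← trace_prodM_shift (fun i => Tper lam E p q c ((i : ℤ) + 1)) q]
  · congr 1
    apply prodM_congr
    intro i _
    unfold Tper
    push_cast
    ring_nf
  · unfold Tper
    have e1 : (((q : ℤ) + 1 + 1) * p + c) / q = ((((0 : ℕ) : ℤ) + 1 + 1) * p + c) / q + p := by
      rw [← Int.add_mul_ediv_right _ _ hq']
      push_cast
      ring_nf
    have e2 : (((q : ℤ) + 1) * p + c) / q = ((((0 : ℕ) : ℤ) + 1) * p + c) / q + p := by
      rw [← Int.add_mul_ediv_right _ _ hq']
      push_cast
      ring_nf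
    rw [e1, e2]
    ring_nf

lemma Gper_const (lam E : ℝ) (p : ℤ) (q : ℕ) (hq : 0 < q) (h : IsCoprime p (q : ℤ)) (c : ℤ) :
    Gper lam E p q c = Gper lam E p q 0 := by
  obtain ⟨u, v, huv⟩ := h
  have h1 := (Gper_add_p lam E p q hq).int_mul (c * u)
  have h2 := (Gper_add_q lam E p q hq).int_mul (c * v)
  have h3 := h1 0
  have h4 := h2 (0 + (c * u) * p)
  simp only [Int.cast_id] at h3 h4
  rw [← h3, ← h4]
  congr 1
  linear_combination (-c) * huv

lemma omega_pos : 0 < goldenOmega := by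
  unfold goldenOmega
  have : (1 : ℝ) < √5 := by
    rw [Real.lt_sqrt] <;> norm_num
  linarith

lemma omega_sq : goldenOmega ^ 2 = 1 - goldenOmega := by
  unfold goldenOmega
  have : √5 ^ 2 = (5 : ℝ) := Real.sq_sqrt (by norm_num)
  nlinarith

lemma omega_lt_one : goldenOmega < 1 := by
  nlinarith [omega_sq, omega_pos]

lemma vTheta_eq (θ : ℝ) (n : ℤ) :
    vTheta θ n = ((⌊((n + 1 : ℤ) : ℝ) * goldenOmega + θ⌋ - ⌊(n : ℝ) * goldenOmega + θ⌋ : ℤ) : ℝ) := by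
  have h0 := omega_pos
  have h1 := omega_lt_one
  unfold vTheta
  have hx : ((n + 1 : ℤ) : ℝ) * goldenOmega + θ = ((n : ℝ) * goldenOmega + θ) + goldenOmega := by
    push_cast; ring
  rw [hx]
  generalize (n : ℝ) * goldenOmega + θ = x
  have hf := Int.floor_add_fract x
  have hl := Int.fract_lt_one x
  have hn := Int.fract_nonneg x
  split_ifs with h
  · have : ⌊x + goldenOmega⌋ = ⌊x⌋ + 1 := by
      rw [Int.floor_eq_iff]
      push_cast
      have := h.1
      constructor <;> linarith
    rw [this]; simp
  · have h' : Int.fract x < 1 - goldenOmega := by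
      by_contra hh
      exact h ⟨not_lt.1 hh, hl⟩
    have : ⌊x + goldenOmega⌋ = ⌊x⌋ := by
      rw [Int.floor_eq_iff]
      constructor <;> linarith
    rw [this]; simp

lemma fib_delta (n : ℕ) :
    (Nat.fib (n + 1) : ℝ) * goldenOmega - Nat.fib n = (-1) ^ n * goldenOmega ^ (n + 1) := by
  induction n with
  | zero => simp
  | succ n ih =>
    rw [Nat.fib_add_two (n := n)]
    push_cast
    have h := omega_sq
    have : (-1 : ℝ) ^ (n + 1) * goldenOmega ^ (n + 1 + 1)
        = -goldenOmega * ((-1) ^ n * goldenOmega ^ (n + 1)) := by ring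
    rw [this, ← ih]
    linear_combination (Nat.fib (n + 1) : ℝ) * h

lemma fib_mul_pow_lt (n : ℕ) :
    (Nat.fib n : ℝ) * goldenOmega ^ n < 1 ∧ (Nat.fib (n + 1) : ℝ) * goldenOmega ^ (n + 1) < 1 := by
  have h0 := omega_pos
  have h1 := omega_lt_one
  have h := omega_sq
  induction n with
  | zero => simp [h1]
  | succ n ih =>
    refine ⟨ih.2, ?_⟩
    rw [Nat.fib_add_two (n := n)]
    push_cast
    have e : ((Nat.fib n : ℝ) + Nat.fib (n + 1)) * goldenOmega ^ (n + 1 + 1)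
        = goldenOmega ^ 2 * (Nat.fib n * goldenOmega ^ n)
          + goldenOmega * (Nat.fib (n + 1) * goldenOmega ^ (n + 1)) := by ring
    rw [e]
    have := mul_lt_mul_of_pos_left ih.1 (pow_pos h0 2)
    have := mul_lt_mul_of_pos_left ih.2 h0
    linarith

lemma ediv_succ_ne (q a : ℤ) (hq : 0 < q) (h : a / q ≠ (a + 1) / q) : q ∣ a + 1 := by
  by_contra hd
  apply h
  have h1 := Int.emod_nonneg (a + 1) hq.ne'
  have h2 := Int.emod_lt_of_pos (a + 1) hq
  have h3 : (a + 1) % q ≠ 0 := fun h => hd (Int.dvd_of_emod_eq_zero h)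
  have h4 := Int.emod_add_mul_ediv (a + 1) q
  have h5 : a = ((a + 1) % q - 1) + q * ((a + 1) / q) := by omega
  rw [h5, Int.add_mul_ediv_left _ _ hq.ne', Int.ediv_eq_zero_of_lt (by omega) (by omega), ← h5]
  simp

lemma ediv_of_add_mul (q p f : ℤ) (hq : 0 < q) :
    ((q + 1) * p + f) / q = (1 * p + f) / q + p := by
  rw [← Int.add_mul_ediv_right _ _ hq.ne']
  ring_nf

/-- The combinatorial heart: choosing the phase of the periodic approximant. -/
lemma choose_phase (p q c : ℤ) (hq : 0 < q) (hpq : IsCoprime p q) (f : ℤ → ℤ)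
    (hf : ∀ n, 1 ≤ n → n ≤ q + 1 → f n = c ∨ f n = c + 1)
    (hend : ((q + 1) * p + f (q + 1)) / q = (1 * p + f 1) / q + p) :
    ∃ d : ℤ, ∀ n, 1 ≤ n → n ≤ q + 1 → (n * p + f n) / q = (n * p + d) / q := by
  by_cases hall : ∀ n, 1 ≤ n → n ≤ q + 1 → (n * p + f n) / q = (n * p + c) / q
  · exact ⟨c, hall⟩
  push Not at hall
  obtain ⟨m, hm1, hm2, hm⟩ := hall
  have hfm : f m = c + 1 := by
    rcases hf m hm1 hm2 with h | h
    · rw [h] at hm; exact absurd rfl hm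
    · exact h
  have hdm : q ∣ m * p + c + 1 := by
    apply ediv_succ_ne q _ hq
    rw [hfm, ← add_assoc] at hm
    exact hm.symm
  refine ⟨c + 1, fun n hn1 hn2 => ?_⟩
  rcases hf n hn1 hn2 with h | h
  swap
  · rw [h]
  by_contra hne
  have hne0 := hne
  rw [h, ← add_assoc] at hne
  have hdn := ediv_succ_ne q _ hq hne
  have hd : q ∣ (n - m) * p := by
    have := dvd_sub hdn hdm
    have e : (n - m) * p = n * p + c + 1 - (m * p + c + 1) := by ring
    rw [e]
    exact this
  have hd' : q ∣ n - m := hpq.symm.dvd_of_dvd_mul_right hd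
  rw [ediv_of_add_mul _ _ _ hq] at hend
  obtain ⟨t, ht⟩ := hd'
  have ht1 : t ≤ 1 := by
    by_contra hh
    nlinarith
  have ht2 : -1 ≤ t := by
    by_contra hh
    nlinarith
  have : t = 0 ∨ t = 1 ∨ t = -1 := by omega
  rcases this with rfl | rfl | rfl
  · have : n = m := by omega
    rw [this] at h
    omega
  · have e1 : n = q + 1 := by omega
    have e2 : m = 1 := by omega
    subst e1 e2
    rw [ediv_of_add_mul _ _ _ hq, ediv_of_add_mul _ _ _ hq] at hne0
    rw [hfm] at hend
    apply hne0
    omega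
  · have e1 : m = q + 1 := by omega
    have e2 : n = 1 := by omega
    subst e1 e2
    rw [hfm] at hend
    apply hne0
    omega

lemma floor_eq_ediv (ω θ : ℝ) (p n : ℤ) (q : ℕ) (hq : 0 < q) :
    ⌊(n : ℝ) * ω + θ⌋ = (n * p + ⌊(n : ℝ) * (q * ω - p) + q * θ⌋) / (q : ℤ) := by
  have hq' : (0 : ℝ) < q := by exact_mod_cast hq
  have hz : (0 : ℤ) < q := by exact_mod_cast hq
  set f := ⌊(n : ℝ) * (q * ω - p) + q * θ⌋ with hf
  have h1 : (f : ℝ) ≤ (n : ℝ) * (q * ω - p) + q * θ := Int.floor_le _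
  have h2 : (n : ℝ) * (q * ω - p) + q * θ < f + 1 := Int.lt_floor_add_one _
  apply le_antisymm
  · rw [Int.le_ediv_iff_mul_le hz]
    have : ⌊(n : ℝ) * ω + θ⌋ * (q : ℤ) - n * p ≤ f := by
      rw [hf, Int.le_floor]
      push_cast
      have := Int.floor_le ((n : ℝ) * ω + θ)
      nlinarith
    linarith
  · rw [Int.le_floor]
    have h3 : (n * p + f) / (q : ℤ) * q ≤ n * p + f := Int.ediv_mul_le _ hz.ne'
    have h4 : (((n * p + f) / (q : ℤ) : ℤ) : ℝ) * q ≤ n * p + f := by exact_mod_cast h3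
    have h5 : (((n * p + f) / (q : ℤ) : ℤ) : ℝ) * q ≤ ((n : ℝ) * ω + θ) * q := by nlinarith
    exact le_of_mul_le_mul_right h5 hq'

lemma xTrace_eq_Gper (lam θ : ℝ) (k : ℕ)
    (hend : ⌊goldenOmega + θ + (-1) ^ (k + 1) * goldenOmega ^ (k + 2)⌋ = ⌊goldenOmega + θ⌋)
    (E : ℝ) :
    xTrace lam θ k E = Gper lam E (Nat.fib (k + 1)) (Nat.fib (k + 2)) 0 := by
  have hq : 0 < Nat.fib (k + 2) := Nat.fib_pos.2 (by omega)
  have hcop : IsCoprime (Nat.fib (k + 1) : ℤ) (Nat.fib (k + 2) : ℤ) :=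
    Nat.isCoprime_iff_coprime.2 (Nat.fib_coprime_fib_succ (k + 1))
  have hδ := fib_delta (k + 1)
  have hb := (fib_mul_pow_lt (k + 2)).1
  have hb0 : 0 ≤ (Nat.fib (k + 2) : ℝ) * goldenOmega ^ (k + 2) := by
    have := omega_pos; positivity
  set q := Nat.fib (k + 2) with hqd
  set p := Nat.fib (k + 1) with hpd
  have hz : (0 : ℤ) < q := by exact_mod_cast hq
  set δ : ℝ := q * goldenOmega - ((p : ℤ) : ℝ) with hδd
  have hδ' : δ = (-1) ^ (k + 1) * goldenOmega ^ (k + 2) := by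
    rw [hδd, ← hδ]; push_cast; rfl
  have hqR : (0 : ℝ) < q := by exact_mod_cast hq
  have habs : |(q : ℝ) * δ| < 1 := by
    have : |δ| = goldenOmega ^ (k + 2) := by
      rw [hδ', abs_mul, abs_pow, abs_neg, abs_one, one_pow, one_mul,
        abs_of_pos (pow_pos omega_pos _)]
    rw [abs_mul, this, abs_of_pos hqR]
    exact hb
  obtain ⟨hab1, hab2⟩ := abs_lt.1 habs
  have key : ∃ d : ℤ, ∀ n : ℤ, 1 ≤ n → n ≤ (q : ℤ) + 1 →
      (n * (p : ℤ) + ⌊(n : ℝ) * δ + q * θ⌋) / (q : ℤ) = (n * p + d) / (q : ℤ) := by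
    refine choose_phase p q ⌊min δ ((q + 1) * δ) + q * θ⌋ hz hcop
      (fun n => ⌊(n : ℝ) * δ + q * θ⌋) ?_ ?_
    · intro n hn1 hn2
      have hn1' : (1 : ℝ) ≤ n := by exact_mod_cast hn1
      have hn2' : (n : ℝ) ≤ q + 1 := by exact_mod_cast hn2
      set m := min δ ((q + 1) * δ) with hm
      have hlow : m ≤ n * δ ∧ n * δ < m + 1 := by
        rcases le_total 0 δ with h | h
        · have : m = δ := min_eq_left (by nlinarith)
          rw [this]; constructor <;> nlinarith
        · have : m = (q + 1) * δ := min_eq_right (by nlinarith)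
          rw [this]; constructor <;> nlinarith
      have a1 : ⌊m + q * θ⌋ ≤ ⌊(n : ℝ) * δ + q * θ⌋ := Int.floor_mono (by linarith [hlow.1])
      have a2 : ⌊(n : ℝ) * δ + q * θ⌋ < ⌊m + q * θ⌋ + 2 := by
        rw [Int.floor_lt]
        push_cast
        linarith [hlow.2, Int.lt_floor_add_one (m + q * θ)]
      omega
    · have e1 := floor_eq_ediv goldenOmega θ p (q + 1) q hq
      have e2 := floor_eq_ediv goldenOmega θ p 1 q hq
      rw [← hδd] at e1 e2
      rw [← e1, ← e2]
      have : (((q : ℤ) + 1 : ℤ) : ℝ) * goldenOmega + θ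
          = (goldenOmega + θ + (-1) ^ (k + 1) * goldenOmega ^ (k + 2)) + ((p : ℤ) : ℝ) := by
        rw [← hδ', hδd]; push_cast; ring
      rw [this, Int.floor_add_intCast, hend]
      simp
  obtain ⟨d, hd⟩ := key
  rw [← Gper_const lam E p q hq hcop d]
  unfold xTrace Gper
  rw [Mmat_eq_prodM]
  congr 1
  apply prodM_congr
  intro i hi
  unfold Tmat Tper
  have hi' : (i : ℤ) < q := by exact_mod_cast hi
  rw [vTheta_eq, floor_eq_ediv goldenOmega θ p _ q hq, floor_eq_ediv goldenOmega θ p _ q hq,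
    ← hδd, hd _ (by omega) (by omega), hd _ (by omega) (by omega)]

lemma floor_end_even (θ : ℝ) (k : ℕ) (hk : Even k)
    (h : 1 - goldenOmega ≤ Int.fract (goldenOmega + θ)) :
    ⌊goldenOmega + θ + (-1) ^ (k + 1) * goldenOmega ^ (k + 2)⌋ = ⌊goldenOmega + θ⌋ := by
  have h0 := omega_pos
  have h1 := omega_lt_one
  have hp : goldenOmega ^ (k + 2) ≤ goldenOmega ^ 2 :=
    pow_le_pow_of_le_one h0.le h1.le (by omega)
  have hp0 := pow_pos h0 (k + 2)
  rw [hk.add_one.neg_one_pow, Int.floor_eq_iff]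
  have := Int.floor_add_fract (goldenOmega + θ)
  have := Int.fract_lt_one (goldenOmega + θ)
  have := omega_sq
  constructor <;> linarith

lemma floor_end_odd (θ : ℝ) (k : ℕ) (hk : Odd k)
    (h : Int.fract (goldenOmega + θ) < 1 - goldenOmega ^ 3) :
    ⌊goldenOmega + θ + (-1) ^ (k + 1) * goldenOmega ^ (k + 2)⌋ = ⌊goldenOmega + θ⌋ := by
  have h0 := omega_pos
  have h1 := omega_lt_one
  have hk1 := hk.pos
  have hp : goldenOmega ^ (k + 2) ≤ goldenOmega ^ 3 :=
    pow_le_pow_of_le_one h0.le h1.le (by omega)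
  have hp0 := pow_pos h0 (k + 2)
  rw [hk.add_one.neg_one_pow, Int.floor_eq_iff]
  have := Int.floor_add_fract (goldenOmega + θ)
  have := Int.fract_nonneg (goldenOmega + θ)
  constructor <;> linarith

/-- For every `λ > 0` and every `θ`, either for all odd `k ≥ 1` and all `E ∈ ℝ` we have
`x_k(E, λ, θ) = x_k(E, λ, 0)`, or for all even `k ≥ 0` and all `E ∈ ℝ` we have
`x_k(E, λ, θ) = x_k(E, λ, 0)`. -/
theorem xTrace_phase_invariance (lam : ℝ) (hlam : 0 < lam) (θ : ℝ) :
    (∀ k, Odd k → ∀ E : ℝ, xTrace lam θ k E = xTrace lam 0 k E) ∨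
    (∀ k, Even k → ∀ E : ℝ, xTrace lam θ k E = xTrace lam 0 k E) := by
  have h0 := omega_pos
  have h1 := omega_lt_one
  have h2 := omega_sq
  have hc : goldenOmega ^ 3 < goldenOmega ^ 2 :=
    pow_lt_pow_right_of_lt_one₀ h0 h1 (by norm_num)
  have hc' : goldenOmega ^ 3 < goldenOmega := by
    simpa using pow_lt_pow_right_of_lt_one₀ h0 h1 (show 1 < 3 by norm_num)
  have hhalf : 1 - goldenOmega ≤ goldenOmega := by nlinarith
  have hf0 : Int.fract (goldenOmega + 0) = goldenOmega := by
    rw [add_zero, Int.fract_eq_self.2 ⟨h0.le, h1⟩]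
  rcases lt_or_ge (Int.fract (goldenOmega + θ)) (1 - goldenOmega) with h | h
  · left
    intro k hk E
    rw [xTrace_eq_Gper lam θ k (floor_end_odd θ k hk (by linarith)),
      xTrace_eq_Gper lam 0 k (floor_end_odd 0 k hk (by rw [hf0]; linarith))]
  · right
    intro k hk E
    rw [xTrace_eq_Gper lam θ k (floor_end_even θ k hk h),
      xTrace_eq_Gper lam 0 k (floor_end_even 0 k hk (by rw [hf0]; exact hhalf))]
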